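/- In the max-variant with k = 2 facilities, for every odd number m of groups, the algorithm A*_max has approximation ratio at most 7/2: on every instance with an odd number m of groups, its output has social cost at most 7/2 times the minimum social cost over all feasible solutions. -/

import Mathlib

open Finset

noncomputable section

/-- A distributed facility location setting for `k` facilities and `m` groups:
`n ≥ 2` agents on the real line, partitioned into `m ≥ k` disjoint nonempty groups. -/
structure FLSetting (k m : ℕ) where
  n : ℕ
  hn : 2 ≤ n
  hmk : k ≤ m
  grp : Fin n → Fin m
  surj : Function.Surjective grp

/-- A two-phase mechanism for `k` facilities: for each number `m` of groups, a
representative function on finite multisets of reals, and a selection function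
producing the `k` facility locations from the multiset of representatives. -/
structure TwoPhase (k : ℕ) where
  rep : ℕ → Multiset ℝ → ℝ
  sel : ℕ → Multiset ℝ → Fin k → ℝ

/-- Validity of a two-phase mechanism: the representative of a nonempty multiset
is one of its elements, and the selected facility locations form a sub-multiset
of the representatives. -/
def TwoPhase.Valid {k : ℕ} (M : TwoPhase k) : Prop :=
  (∀ (m : ℕ) (S : Multiset ℝ), S ≠ 0 → M.rep m S ∈ S) ∧
  (∀ (m : ℕ) (R : Multiset ℝ), Multiset.card R = m → k ≤ m →
    (↑(List.ofFn (M.sel m R)) : Multiset ℝ) ≤ R)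

/-- The multiset of (reported) positions of the agents in group `j`. -/
def groupMS {k m : ℕ} (S : FLSetting k m) (x : Fin S.n → ℝ) (j : Fin m) : Multiset ℝ :=
  (Finset.univ.filter (fun i => S.grp i = j)).val.map x

/-- The number of agents in group `j`. -/
def groupSize {k m : ℕ} (S : FLSetting k m) (j : Fin m) : ℕ :=
  (Finset.univ.filter (fun i => S.grp i = j)).card

/-- The multiset of the `m` group representatives. -/
def repsMS {k m : ℕ} (M : TwoPhase k) (S : FLSetting k m) (x : Fin S.n → ℝ) : Multiset ℝ :=
  (Finset.univ.val.map fun j : Fin m => M.rep m (groupMS S x j))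

/-- The facility locations output by mechanism `M` on reported positions `x`. -/
def outcome {k m : ℕ} (M : TwoPhase k) (S : FLSetting k m) (x : Fin S.n → ℝ) : Fin k → ℝ :=
  M.sel m (repsMS M S x)

/-- Sum-variant individual cost: total distance to all facilities. -/
def sumCost (k : ℕ) (xi : ℝ) (y : Fin k → ℝ) : ℝ := ∑ ℓ, |xi - y ℓ|

/-- Max-variant individual cost: distance to the farthest facility. -/
def maxCost (k : ℕ) (xi : ℝ) (y : Fin k → ℝ) : ℝ := ⨆ ℓ, |xi - y ℓ|

/-- Social cost: average over groups of the average individual cost within the group. -/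
def SC {k m : ℕ} (cost : ℝ → (Fin k → ℝ) → ℝ) (S : FLSetting k m) (x : Fin S.n → ℝ)
    (y : Fin k → ℝ) : ℝ :=
  (1 / (m : ℝ)) * ∑ j : Fin m,
    (1 / (groupSize S j : ℝ)) *
      ∑ i ∈ Finset.univ.filter (fun i => S.grp i = j), cost (x i) y

/-- A feasible solution opens the `k` facilities at the positions of `k` distinct agents. -/
def Feasible {k m : ℕ} (S : FLSetting k m) (x : Fin S.n → ℝ) (y : Fin k → ℝ) : Prop :=
  ∃ f : Fin k → Fin S.n, Function.Injective f ∧ ∀ ℓ, y ℓ = x (f ℓ)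

/-- Strategyproofness with respect to an individual cost function. -/
def Strategyproof {k : ℕ} (cost : ℝ → (Fin k → ℝ) → ℝ) (M : TwoPhase k) : Prop :=
  ∀ (m : ℕ) (S : FLSetting k m) (x : Fin S.n → ℝ) (i : Fin S.n) (x' : ℝ),
    cost (x i) (outcome M S x) ≤ cost (x i) (outcome M S (Function.update x i x'))

/-- Strategyproofness restricted to instances with exactly `m` groups. -/
def StrategyproofOn {k : ℕ} (cost : ℝ → (Fin k → ℝ) → ℝ) (M : TwoPhase k) (m : ℕ) : Prop :=
  ∀ (S : FLSetting k m) (x : Fin S.n → ℝ) (i : Fin S.n) (x' : ℝ),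
    cost (x i) (outcome M S x) ≤ cost (x i) (outcome M S (Function.update x i x'))

/-- The `t`-th leftmost element of a multiset of reals (1-indexed). -/
def kthLeftmost (S : Multiset ℝ) (t : ℕ) : ℝ := (S.sort (· ≤ ·)).getD (t - 1) 0

/-- The mechanism `M_m(θ, ℓ, r)` for two facilities: each group's representative is the
position of its `⌈θ·n_g⌉`-th leftmost agent, and the facilities are opened at the
`⌈ℓm⌉`-th and `⌈rm⌉`-th leftmost representative locations. -/
def Mmech (θ l r : ℝ) : TwoPhase 2 where
  rep := fun _ S => kthLeftmost S ⌈θ * (Multiset.card S : ℝ)⌉₊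
  sel := fun m R => ![kthLeftmost R ⌈l * (m : ℝ)⌉₊, kthLeftmost R ⌈r * (m : ℝ)⌉₊]


/-- The algorithm `A✶_max` for two facilities: each group's representative is the position
of its `⌈n_g/2⌉`-th leftmost agent; one facility is opened at the `⌈m/2⌉`-th leftmost
representative location `w₁`, and the other at a representative location other than `w₁`
that is closest to `w₁`. -/
def AmaxAlg : TwoPhase 2 where
  rep := fun _ S => kthLeftmost S ((Multiset.card S + 1) / 2)
  sel := fun m R =>
    let w1 := kthLeftmost R ((m + 1) / 2)
    ![w1, (((R.erase w1).sort (· ≤ ·)).argmin (fun z => |z - w1|)).getD 0]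

/-!
Write `f z` for the cost of position `z` under the output `w`, let `δ = |w 1 - w 0|`, and let `c`
be the first facility of the solution compared with. Put `F z = f c + f z - 7/2 * |z - c|`. At
least half of the agents of a group lie on the side of its median `r` away from `c`, so `f` being
1-Lipschitz makes the group's average of `f z - 7/2 * |z - c|` at most `F r / 2`. It remains to
show that the sum of `F` over the representatives is nonpositive. As `w 0` is the median
representative and `w 1` a closest other one, the other representatives are equally many
`a ≤ w 0 - δ` and `b ≥ w 0 + δ`; with `D = |a - c| + |b - c|`, the bounds `D ≥ b - a ≥ 2 * δ` and
`D ≥ |c - w 0| + δ` give `F a + F b ≤ 0` and `F a + F b + F (w 0) ≤ 0`.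
-/

open scoped BigOperators

lemma expect_le_of_card_le_two_mul_card_filter {ι K : Type*} [Field K] [LinearOrder K]
    [IsStrictOrderedRing K] {s : Finset ι} (hs : s.Nonempty) {p : ι → Prop} [DecidablePred p]
    (hp : #s ≤ 2 * #{i ∈ s | p i}) {F : ι → K} {P Q : K} (hPQ : P ≤ Q) (hP : ∀ i ∈ s, p i → F i ≤ P)
    (hQ : ∀ i ∈ s, F i ≤ Q) : 𝔼 i ∈ s, F i ≤ (P + Q) / 2 := by
  have hsumP : ∑ i ∈ s with p i, F i ≤ #{i ∈ s | p i} * P := by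
    rw [← nsmul_eq_mul]
    exact sum_le_card_nsmul _ _ _ fun i hi => hP i (mem_of_mem_filter i hi) (mem_filter.1 hi).2
  have hsumQ : ∑ i ∈ s with ¬p i, F i ≤ #{i ∈ s | ¬p i} * Q := by
    rw [← nsmul_eq_mul]
    exact sum_le_card_nsmul _ _ _ fun i hi => hQ i (mem_of_mem_filter i hi)
  have hcard : (#s : K) = #{i ∈ s | p i} + #{i ∈ s | ¬p i} := by
    exact_mod_cast (card_filter_add_card_filter_not p).symm
  have hhalf : (#s : K) ≤ 2 * #{i ∈ s | p i} := by exact_mod_cast hp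
  have hexchange := mul_nonneg (sub_nonneg.2 hhalf) (sub_nonneg.2 hPQ)
  rw [expect_eq_sum_div_card, div_le_iff₀ (by exact_mod_cast hs.card_pos),
    ← sum_filter_add_sum_filter_not s p]
  rw [hcard] at hexchange ⊢
  linarith

lemma expect_sub_mul_abs_sub_le_of_median {ι : Type*} {s : Finset ι} (hs : s.Nonempty) {x : ι → ℝ}
    {r : ℝ} (hle : #s ≤ 2 * #{i ∈ s | x i ≤ r}) (hge : #s ≤ 2 * #{i ∈ s | r ≤ x i})
    {f : ℝ → ℝ} (hf : LipschitzWith 1 f) {α : ℝ} (hα : 1 ≤ α) (c : ℝ) :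
    𝔼 i ∈ s, (f (x i) - α * |x i - c|) ≤ (f r - α * |r - c| + f c) / 2 := by
  have hlip (z z' : ℝ) : f z ≤ f z' + |z - z'| := by simpa [Real.dist_eq] using hf.le_add_mul z z'
  have hmax (z : ℝ) : f z - α * |z - c| ≤ f c := by
    linarith [hlip z c, le_mul_of_one_le_left (abs_nonneg (z - c)) hα]
  have hside (z : ℝ) (hz : |z - c| = |z - r| + |r - c|) :
      f z - α * |z - c| ≤ f r - α * |r - c| := by
    rw [hz]
    linarith [hlip z r, le_mul_of_one_le_left (abs_nonneg (z - r)) hα]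
  rcases le_total r c with hrc | hcr
  · refine expect_le_of_card_le_two_mul_card_filter hs hle (hmax r) (fun i _ hi => hside _ ?_)
      fun i _ => hmax _
    grind
  · refine expect_le_of_card_le_two_mul_card_filter hs hge (hmax r) (fun i _ hi => hside _ ?_)
      fun i _ => hmax _
    grind

lemma sum_map_add_sum_map_le_card_nsmul {α β M : Type*} [AddCommMonoid M] [PartialOrder M]
    [IsOrderedAddMonoid M] {A : Multiset α} {B : Multiset β}
    (hcard : Multiset.card A = Multiset.card B) {F : α → M} {G : β → M} {C : M}
    (h : ∀ a ∈ A, ∀ b ∈ B, F a + G b ≤ C) :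
    (A.map F).sum + (B.map G).sum ≤ Multiset.card A • C := by
  induction A using Multiset.induction_on generalizing B with
  | empty =>
    obtain rfl : B = 0 := Multiset.card_eq_zero.1 hcard.symm
    simp
  | cons a A ih =>
    obtain ⟨b, B, rfl, hcardB⟩ :=
      Multiset.card_eq_succ_iff.1 (hcard.symm.trans (Multiset.card_cons a A))
    have hpair := h a (Multiset.mem_cons_self a A) b (Multiset.mem_cons_self b B)
    have hrest := ih hcardB.symm fun a' ha' b' hb' =>
      h a' (Multiset.mem_cons_of_mem ha') b' (Multiset.mem_cons_of_mem hb')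
    simp only [Multiset.map_cons, Multiset.sum_cons, Multiset.card_cons, succ_nsmul']
    rw [add_add_add_comm]
    exact add_le_add hpair hrest

lemma apply_getD_argmin_le {α β : Type*} [LinearOrder β] {f : α → β} {l : List α} {a : α}
    (ha : a ∈ l) (d : α) : f ((l.argmin f).getD d) ≤ f a := by
  cases h : l.argmin f with
  | none => simp [List.argmin_eq_none.1 h] at ha
  | some b => exact List.le_of_mem_argmin ha h

lemma exists_eq_add_cons_kthLeftmost {R : Multiset ℝ} {t : ℕ} (ht : t < Multiset.card R) :
    ∃ A B : Multiset ℝ, R = A + kthLeftmost R (t + 1) ::ₘ B ∧ Multiset.card A = t ∧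
      (∀ a ∈ A, a ≤ kthLeftmost R (t + 1)) ∧ ∀ b ∈ B, kthLeftmost R (t + 1) ≤ b := by
  set l := R.sort (· ≤ ·) with hl
  have hlen : t < l.length := by simpa [hl] using ht
  have hkth : kthLeftmost R (t + 1) = l[t] := List.getD_eq_getElem _ _ hlen
  have hsplit : l = l.take t ++ l[t] :: l.drop (t + 1) := by
    rw [← List.drop_eq_getElem_cons hlen, List.take_append_drop]
  have hsorted : l.Pairwise (· ≤ ·) := Multiset.pairwise_sort R (· ≤ ·)
  rw [hsplit, List.pairwise_append, List.pairwise_cons] at hsorted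
  obtain ⟨-, ⟨hdrop, -⟩, htake⟩ := hsorted
  rw [hkth]
  refine ⟨l.take t, l.drop (t + 1), ?_, by simp [hlen.le],
    fun a ha => htake a ha _ List.mem_cons_self, hdrop⟩
  rw [Multiset.cons_coe, Multiset.coe_add, ← hsplit, hl, Multiset.sort_eq]

/-- The left median of a multiset of reals: its `⌈n/2⌉`-th leftmost element, where `n` is the
cardinality. Both phases of `AmaxAlg` select by it; for the empty multiset it is `0`. -/
def leftMedian (R : Multiset ℝ) : ℝ := kthLeftmost R ((Multiset.card R + 1) / 2)

lemma exists_eq_add_cons_leftMedian {R : Multiset ℝ} (hR : R ≠ 0) :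
    ∃ A B : Multiset ℝ, R = A + leftMedian R ::ₘ B ∧
      Multiset.card A = (Multiset.card R - 1) / 2 ∧
      (∀ a ∈ A, a ≤ leftMedian R) ∧ ∀ b ∈ B, leftMedian R ≤ b := by
  have hpos := Multiset.card_pos.2 hR
  have hindex : (Multiset.card R + 1) / 2 = (Multiset.card R - 1) / 2 + 1 := by omega
  rw [leftMedian, hindex]
  exact exists_eq_add_cons_kthLeftmost (by omega)

lemma card_le_two_mul_countP_le_leftMedian (R : Multiset ℝ) :
    Multiset.card R ≤ 2 * R.countP (· ≤ leftMedian R) := by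
  rcases eq_or_ne R 0 with rfl | hR
  · simp
  obtain ⟨A, B, hsplit, hcard, hA, -⟩ := exists_eq_add_cons_leftMedian hR
  have hcount : Multiset.card A + 1 ≤ R.countP (· ≤ leftMedian R) := by
    generalize leftMedian R = r at hsplit hA ⊢
    rw [hsplit, Multiset.countP_add, Multiset.countP_cons_of_pos (p := (· ≤ r)) _ le_rfl,
      Multiset.countP_eq_card.2 hA]
    omega
  omega

lemma card_le_two_mul_countP_leftMedian_le (R : Multiset ℝ) :
    Multiset.card R ≤ 2 * R.countP (leftMedian R ≤ ·) := by
  rcases eq_or_ne R 0 with rfl | hR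
  · simp
  obtain ⟨A, B, hsplit, hcard, -, hB⟩ := exists_eq_add_cons_leftMedian hR
  have hcount : Multiset.card B + 1 ≤ R.countP (leftMedian R ≤ ·) := by
    generalize leftMedian R = r at hsplit hB ⊢
    rw [hsplit, Multiset.countP_add, Multiset.countP_cons_of_pos (p := (r ≤ ·)) _ le_rfl,
      Multiset.countP_eq_card.2 hB]
    omega
  have hcardR := congrArg Multiset.card hsplit
  rw [Multiset.card_add, Multiset.card_cons] at hcardR
  omega

section MaxCost

variable {k : ℕ} (z : ℝ) (y : Fin k → ℝ)

lemma maxCost_eq_dist : maxCost k z y = dist (fun _ => z) y := by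
  have hbdd : BddAbove (Set.range fun ℓ => |z - y ℓ|) := (Set.finite_range _).bddAbove
  apply le_antisymm
  · exact Real.iSup_le (fun ℓ => dist_le_pi_dist (fun _ => z) y ℓ) dist_nonneg
  · exact (dist_pi_le_iff (Real.iSup_nonneg fun _ => abs_nonneg _)).2 fun ℓ => le_ciSup hbdd ℓ

lemma abs_sub_le_maxCost (ℓ : Fin k) : |z - y ℓ| ≤ maxCost k z y := by
  rw [maxCost_eq_dist]
  exact dist_le_pi_dist (fun _ => z) y ℓ

lemma lipschitzWith_maxCost : LipschitzWith 1 fun z => maxCost k z y := by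
  simp only [maxCost_eq_dist]
  refine LipschitzWith.of_le_add fun z z' => ?_
  rw [add_comm]
  exact (dist_triangle _ (fun _ => z') _).trans (by gcongr; exact dist_pi_const_le z z')

lemma maxCost_two (w : Fin 2 → ℝ) : maxCost 2 z w = max |z - w 0| |z - w 1| :=
  le_antisymm (ciSup_le <| Fin.forall_fin_two.2 ⟨le_max_left _ _, le_max_right _ _⟩)
    (max_le (abs_sub_le_maxCost z w 0) (abs_sub_le_maxCost z w 1))

end MaxCost

/-- The function `F` of the argument above. For a group with median `r`, half of it bounds the
excess of the group's average cost under `w` over `7/2` times its average distance to `c`. -/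
def excess (w : Fin 2 → ℝ) (c r : ℝ) : ℝ := maxCost 2 r w - 7 / 2 * |r - c| + maxCost 2 c w

lemma maxCost_add_maxCost_of_mem_Icc {w : Fin 2 → ℝ} {a b : ℝ} (hw : ∀ ℓ, w ℓ ∈ Set.Icc a b) :
    maxCost 2 a w + maxCost 2 b w = b - a + |w 1 - w 0| := by
  obtain ⟨⟨ha0, h0b⟩, ha1, h1b⟩ := And.intro (hw 0) (hw 1)
  rw [maxCost_two, maxCost_two, abs_of_nonpos (sub_nonpos.2 ha0), abs_of_nonpos (sub_nonpos.2 ha1),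
    abs_of_nonneg (sub_nonneg.2 h0b), abs_of_nonneg (sub_nonneg.2 h1b)]
  grind

lemma excess_add_excess_le {w : Fin 2 → ℝ} {a b : ℝ} (ha : a ≤ w 0 - |w 1 - w 0|)
    (hb : w 0 + |w 1 - w 0| ≤ b) (c : ℝ) :
    excess w c a + excess w c b ≤ min 0 (-excess w c (w 0)) := by
  set δ := |w 1 - w 0| with hδ
  have hw0 : maxCost 2 (w 0) w = δ := by simp [maxCost_two, hδ, abs_sub_comm]
  have hc : maxCost 2 c w ≤ δ + |w 0 - c| := by
    simpa [Real.dist_eq, hw0, abs_sub_comm] using (lipschitzWith_maxCost w).le_add_mul c (w 0)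
  have hab : maxCost 2 a w + maxCost 2 b w = b - a + δ := by
    refine maxCost_add_maxCost_of_mem_Icc (Fin.forall_fin_two.2 ⟨?_, ?_⟩) <;> grind
  have hD_ab : b - a ≤ |a - c| + |b - c| := by grind
  have hδ_ab : 2 * δ ≤ b - a := by linarith
  have hD_c : |w 0 - c| + δ ≤ |a - c| + |b - c| := by grind
  simp only [excess, le_min_iff]
  constructor
  · linarith only [hc, hab, hD_ab, hD_c, hδ_ab]
  · linarith only [hw0, hc, hab, hD_ab, hD_c, hδ_ab, abs_nonneg (w 0 - c)]

lemma sum_map_excess_nonpos {A B : Multiset ℝ} {w : Fin 2 → ℝ}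
    (hcard : Multiset.card A = Multiset.card B) (hpos : 0 < Multiset.card A)
    (hA : ∀ a ∈ A, a ≤ w 0) (hB : ∀ b ∈ B, w 0 ≤ b)
    (hmin : ∀ z ∈ A + B, |w 1 - w 0| ≤ |z - w 0|) (c : ℝ) :
    ((A + w 0 ::ₘ B).map (excess w c)).sum ≤ 0 := by
  have hA' (a : ℝ) (ha : a ∈ A) : a ≤ w 0 - |w 1 - w 0| := by
    have hdist := hmin a (Multiset.mem_add.2 (Or.inl ha))
    rw [abs_of_nonpos (sub_nonpos.2 (hA a ha))] at hdist
    linarith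
  have hB' (b : ℝ) (hb : b ∈ B) : w 0 + |w 1 - w 0| ≤ b := by
    have hdist := hmin b (Multiset.mem_add.2 (Or.inr hb))
    rw [abs_of_nonneg (sub_nonneg.2 (hB b hb))] at hdist
    linarith
  rw [Multiset.map_add, Multiset.map_cons, Multiset.sum_add, Multiset.sum_cons]
  have hAB : (A.map (excess w c)).sum + (B.map (excess w c)).sum ≤ -excess w c (w 0) :=
    calc (A.map (excess w c)).sum + (B.map (excess w c)).sum
        ≤ Multiset.card A • min 0 (-excess w c (w 0)) :=
          sum_map_add_sum_map_le_card_nsmul hcard fun a ha b hb =>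
            excess_add_excess_le (hA' a ha) (hB' b hb) c
      _ ≤ 1 • min 0 (-excess w c (w 0)) := nsmul_le_nsmul_left_of_nonpos (min_le_left _ _) hpos
      _ ≤ -excess w c (w 0) := by rw [one_nsmul]; exact min_le_right _ _
  linarith

section Setting

variable {k m : ℕ} (S : FLSetting k m)

lemma SC_eq_expect (cost : ℝ → (Fin k → ℝ) → ℝ) (x : Fin S.n → ℝ) (y : Fin k → ℝ) :
    SC cost S x y = 𝔼 j, 𝔼 i with S.grp i = j, cost (x i) y := by
  simp only [SC, groupSize, expect_eq_sum_div_card, one_div_mul_eq_div, card_univ, Fintype.card_fin]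

lemma card_repsMS (M : TwoPhase k) (x : Fin S.n → ℝ) :
    Multiset.card (repsMS M S x) = m := by
  simp [repsMS]

lemma nonempty_filter_grp_eq (j : Fin m) : (univ.filter fun i => S.grp i = j).Nonempty := by
  obtain ⟨i, hi⟩ := S.surj j
  exact ⟨i, by simp [hi]⟩

lemma expect_maxCost_sub_le_excess (x : Fin S.n → ℝ) (w : Fin 2 → ℝ) (c : ℝ) (j : Fin m) :
    𝔼 i with S.grp i = j, (maxCost 2 (x i) w - 7 / 2 * |x i - c|) ≤
      excess w c (leftMedian (groupMS S x j)) / 2 := by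
  have hle := card_le_two_mul_countP_le_leftMedian (groupMS S x j)
  have hge := card_le_two_mul_countP_leftMedian_le (groupMS S x j)
  generalize leftMedian (groupMS S x j) = r at hle hge ⊢
  rw [groupMS, Multiset.countP_map, Multiset.card_map] at hle hge
  exact expect_sub_mul_abs_sub_le_of_median (nonempty_filter_grp_eq S j) hle hge
    (lipschitzWith_maxCost w) (by norm_num) c

end Setting

section AmaxAlg

variable {m : ℕ} (S : FLSetting 2 m) (x : Fin S.n → ℝ)

lemma outcome_AmaxAlg_zero : outcome AmaxAlg S x 0 = leftMedian (repsMS AmaxAlg S x) := by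
  rw [leftMedian, card_repsMS S AmaxAlg x]
  rfl

lemma abs_outcome_AmaxAlg_one_sub_le {z : ℝ}
    (hz : z ∈ (repsMS AmaxAlg S x).erase (outcome AmaxAlg S x 0)) :
    |outcome AmaxAlg S x 1 - outcome AmaxAlg S x 0| ≤ |z - outcome AmaxAlg S x 0| :=
  apply_getD_argmin_le (f := fun z => |z - outcome AmaxAlg S x 0|) ((Multiset.mem_sort _).2 hz) 0

lemma sum_excess_outcome_AmaxAlg_nonpos (hm : Odd m) (c : ℝ) :
    ∑ j, excess (outcome AmaxAlg S x) c (leftMedian (groupMS S x j)) ≤ 0 := by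
  set R := repsMS AmaxAlg S x with hR
  have hcardR : Multiset.card R = m := card_repsMS S AmaxAlg x
  have hm2 : 2 ≤ m := S.hmk
  have hR0 : R ≠ 0 := Multiset.card_pos.1 (by omega)
  obtain ⟨A, B, hsplit, hcardA, hA, hB⟩ := exists_eq_add_cons_leftMedian hR0
  have hcardAB : Multiset.card A + (Multiset.card B + 1) = m := by
    rw [← hcardR, hsplit, Multiset.card_add, Multiset.card_cons]
  rw [← outcome_AmaxAlg_zero] at hsplit hA hB
  have herase : R.erase (outcome AmaxAlg S x 0) = A + B := by
    rw [hsplit, Multiset.add_cons, Multiset.erase_cons_head]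
  have hmin (z : ℝ) (hz : z ∈ A + B) := abs_outcome_AmaxAlg_one_sub_le S x (herase ▸ hz)
  have hsum := sum_map_excess_nonpos (by grind) (by grind) hA hB hmin c
  rw [← hsplit, hR, repsMS, Multiset.map_map] at hsum
  exact hsum

theorem stmt14_general (hm : Odd m) (y : Fin 2 → ℝ) :
    SC (maxCost 2) S x (outcome AmaxAlg S x) ≤ 7 / 2 * SC (maxCost 2) S x y := by
  set w := outcome AmaxAlg S x
  have hexcess : 𝔼 j, 𝔼 i with S.grp i = j, (maxCost 2 (x i) w - 7 / 2 * |x i - y 0|) ≤ 0 :=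
    calc _ ≤ 𝔼 j, excess w (y 0) (leftMedian (groupMS S x j)) / 2 :=
          expect_le_expect fun j _ => expect_maxCost_sub_le_excess S x w (y 0) j
      _ = (∑ j, excess w (y 0) (leftMedian (groupMS S x j))) / m / 2 := by
          rw [← expect_div, expect_eq_sum_div_card, card_univ, Fintype.card_fin]
      _ ≤ 0 := div_nonpos_of_nonpos_of_nonneg
          (div_nonpos_of_nonpos_of_nonneg (sum_excess_outcome_AmaxAlg_nonpos S x hm (y 0))
            (Nat.cast_nonneg m)) zero_le_two
  have hmono : 𝔼 j, 𝔼 i with S.grp i = j, |x i - y 0| ≤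
      𝔼 j, 𝔼 i with S.grp i = j, maxCost 2 (x i) y :=
    expect_le_expect fun j _ => expect_le_expect fun i _ => abs_sub_le_maxCost (x i) y 0
  simp only [expect_sub_distrib, ← mul_expect] at hexcess
  rw [SC_eq_expect, SC_eq_expect]
  linarith

end AmaxAlg

/-- In the max-variant with two facilities, for every odd number `m` of groups, the
algorithm `A✶_max` has approximation ratio at most `7/2`. -/
theorem stmt14 (m : ℕ) (hmodd : Odd m)
    (S : FLSetting 2 m) (x : Fin S.n → ℝ) (y : Fin 2 → ℝ) (hy : Feasible S x y) :
    SC (maxCost 2) S x (outcome AmaxAlg S x) ≤ (7 / 2) * SC (maxCost 2) S x y :=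
  stmt14_general S x hmodd y

end
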